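/- Let n ≥ 2k + 1 and let G be a graph on n vertices with no matching of size k + 1. Then the number of edges of G is at most max{ C(2k+1, 2), C(n,2) − k(n−k) } (equivalently, e(G) ≤ max{ k(2k+1), kn − C(k+1,2) }). -/

import Mathlib

/-- `G` has a matching of size `m`: a set of `m` pairwise disjoint edges,
formalized as a subgraph all of whose vertices have a unique neighbor. -/
def hasMatchingOfSize {V : Type*} (G : SimpleGraph V) (m : ℕ) : Prop :=
  ∃ M : SimpleGraph.Subgraph G, M.IsMatching ∧ M.edgeSet.ncard = m

/-!
Join `G` with a complete graph on `n - 2k - 2` new vertices. A perfect matching of the join would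
use each new vertex only once and so contain `k + 1` edges of `G`; hence by Tutte's theorem the join
has a Tutte violator. It must contain every new vertex, and removing the new vertices from it gives
a set `S` of `s` vertices of `G` such that `G - S` has at least `s + n - 2k` odd components
(parity supplies the last component).

A graph on `n - s` vertices with `c` components has at most `C(n - s - c + 1, 2)` edges, so
`e(G) ≤ C(n, 2) - C(n - s, 2) + C(2 (k - s) + 1, 2)`. The right-hand side is convex in
`s ∈ [0, k]`, hence largest at an endpoint, where it takes the two values in the maximum.
-/

section Matchings

variable {V : Type*} {G : SimpleGraph V}

lemma hasMatchingOfSize_ncard {T : Set (Sym2 V)} (hTG : T ⊆ G.edgeSet)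
    (hT : ∀ ⦃v u w⦄, s(v, u) ∈ T → s(v, w) ∈ T → u = w) : hasMatchingOfSize G T.ncard := by
  refine ⟨{ verts := {v | ∃ w, s(v, w) ∈ T}
            Adj := fun v w ↦ s(v, w) ∈ T
            adj_sub := fun h ↦ hTG h
            edge_vert := fun {v w} h ↦ ⟨w, h⟩
            symm := ⟨fun v w h ↦ Sym2.eq_swap ▸ h⟩ },
    fun v ⟨w, hw⟩ ↦ ⟨w, hw, fun u hu ↦ hT hu hw⟩, ?_⟩
  congr 1
  ext ⟨u, v⟩
  rfl

lemma hasMatchingOfSize.anti {l m : ℕ} (hm : hasMatchingOfSize G m) (hlm : l ≤ m) :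
    hasMatchingOfSize G l := by
  obtain ⟨M, hM, rfl⟩ := hm
  obtain ⟨T, hTM, rfl⟩ := Set.exists_subset_card_eq hlm
  exact hasMatchingOfSize_ncard (hTM.trans M.edgeSet_subset)
    fun v u w hu hw ↦ hM.eq_of_adj_left (hTM hu) (hTM hw)

lemma ncard_verts_le_of_isMatching [Finite V] {M : G.Subgraph} (hM : M.IsMatching) :
    M.verts.ncard ≤ 2 * M.edgeSet.ncard := by
  classical
  have := Fintype.ofFinite V
  have htwo : ∀ e ∈ M.edgeSet.toFinset, e.toFinset.card ≤ 2 := fun e _ ↦ by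
    rw [Sym2.card_toFinset]
    split_ifs <;> decide
  have hverts : M.verts.toFinset = M.edgeSet.toFinset.biUnion Sym2.toFinset := by
    ext v
    simp [hM.verts_eq_biUnion_edgeSet]
  rw [Set.ncard_eq_toFinset_card', Set.ncard_eq_toFinset_card', hverts, mul_comm]
  exact Finset.card_biUnion_le_card_mul _ _ _ htwo

lemma ncard_sep_edgeSet_le_of_isMatching [Finite V] {M : G.Subgraph} (hM : M.IsMatching)
    (s : Set V) :
    {e ∈ M.edgeSet | ∃ v ∈ s, v ∈ e}.ncard ≤ s.ncard := by
  have hsub : {e ∈ M.edgeSet | ∃ v ∈ s, v ∈ e} ⊆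
      Subtype.val '' (hM.toEdge '' (Subtype.val ⁻¹' s)) := by
    rintro e ⟨he, v, hvs, w, rfl⟩
    have hvw : M.Adj v w := he
    exact ⟨_, ⟨⟨v, hvw.fst_mem⟩, hvs, hM.toEdge_eq_of_adj hvw⟩, rfl⟩
  calc {e ∈ M.edgeSet | ∃ v ∈ s, v ∈ e}.ncard
    _ ≤ (Subtype.val '' (hM.toEdge '' (Subtype.val ⁻¹' s))).ncard := Set.ncard_le_ncard hsub
    _ ≤ (Subtype.val ⁻¹' s : Set M.verts).ncard := (Set.ncard_image_le).trans Set.ncard_image_le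
    _ = (Subtype.val '' (Subtype.val ⁻¹' s : Set M.verts)).ncard :=
      (Set.ncard_image_of_injective _ Subtype.val_injective).symm
    _ ≤ s.ncard := Set.ncard_le_ncard (Set.image_preimage_subset _ _)

lemma exists_hasMatchingOfSize_ncard_edgeSet_le {W : Type*} [Finite W] {H : SimpleGraph W}
    (f : G ↪g H) {M : H.Subgraph} (hM : M.IsMatching) :
    ∃ m, hasMatchingOfSize G m ∧ M.edgeSet.ncard ≤ m + (Set.range f)ᶜ.ncard := by
  let T : Set (Sym2 V) := Sym2.map f ⁻¹' M.edgeSet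
  have hcover : M.edgeSet ⊆
      Sym2.map f '' T ∪ {e ∈ M.edgeSet | ∃ w ∈ (Set.range f)ᶜ, w ∈ e} := by
    rintro ⟨x, y⟩ he
    by_cases hx : x ∈ Set.range f
    · by_cases hy : y ∈ Set.range f
      · obtain ⟨u, rfl⟩ := hx
        obtain ⟨v, rfl⟩ := hy
        exact Or.inl ⟨s(u, v), he, rfl⟩
      · exact Or.inr ⟨he, y, hy, Sym2.mem_mk_right x y⟩
    · exact Or.inr ⟨he, x, hx, Sym2.mem_mk_left x y⟩
  have := Finite.of_injective f f.injective
  refine ⟨T.ncard, hasMatchingOfSize_ncard ?_ ?_, ?_⟩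
  · rintro ⟨u, v⟩ huv
    exact f.map_adj_iff.1 (M.adj_sub huv)
  · exact fun v u w hu hw ↦ f.injective (hM.eq_of_adj_left hu hw)
  · calc M.edgeSet.ncard
        ≤ (Sym2.map f '' T).ncard + {e ∈ M.edgeSet | ∃ w ∈ (Set.range f)ᶜ, w ∈ e}.ncard :=
          (Set.ncard_le_ncard hcover).trans (Set.ncard_union_le _ _)
      _ ≤ T.ncard + (Set.range f)ᶜ.ncard :=
          Nat.add_le_add Set.ncard_image_le (ncard_sep_edgeSet_le_of_isMatching hM _)

end Matchings

section OddComponents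

variable {V W : Type*} {G : SimpleGraph V} {H : SimpleGraph W}

lemma ncard_oddComponents_congr (φ : G ≃g H) :
    G.oddComponents.ncard = H.oddComponents.ncard :=
  Nat.card_congr <| φ.connectedComponentEquiv.subtypeEquiv fun C ↦ by
    simp only [Set.mem_ofPred_eq, ← Nat.card_coe_set_eq, Nat.card_congr (C.isoEquivSupp φ)]

lemma isTutteViolator_iff {U : Set V} :
    G.IsTutteViolator U ↔ U.ncard < (G.induce Uᶜ).oddComponents.ncard := by
  have hdel : (⊤ : G.Subgraph).deleteVerts U = (⊤ : G.Subgraph).induce Uᶜ := by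
    rw [Set.compl_eq_univ_sdiff]; rfl
  rw [SimpleGraph.IsTutteViolator, hdel, SimpleGraph.induce_eq_coe_induce_top]
  rfl

lemma even_ncard_oddComponents_add_ncard_iff [Finite V] (G : SimpleGraph V) (U : Set V) :
    Even ((G.induce Uᶜ).oddComponents.ncard + U.ncard) ↔ Even (Nat.card V) := by
  have hodd := (G.induce Uᶜ).odd_ncard_oddComponents
  rw [Nat.card_coe_set_eq] at hodd
  rw [← Set.ncard_add_ncard_compl U]
  grind

/-- An embedding `f : G ↪g H` restricted to an isomorphism between the subgraphs induced on
a set `s` of vertices in the range of `f` and on the preimage of `s`. -/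
noncomputable def induceIso (f : G ↪g H) {s : Set W} (hs : s ⊆ Set.range f) :
    G.induce (f ⁻¹' s) ≃g H.induce s where
  toEquiv := Equiv.ofBijective (s.restrictPreimage f)
    ⟨f.injective.restrictPreimage s, fun ⟨w, hw⟩ ↦ by
      obtain ⟨v, rfl⟩ := hs hw
      exact ⟨⟨v, hw⟩, rfl⟩⟩
  map_rel_iff' := f.map_adj_iff

end OddComponents

section Join

variable {V W : Type*} {G : SimpleGraph V}

/-- The join of `G` with the complete graph on `W`: every vertex of `W` is adjacent to all other
vertices. -/
def joinTop (G : SimpleGraph V) (W : Type*) : SimpleGraph (V ⊕ W) :=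
  (G ⊕g ⊤) ⊔ completeBipartiteGraph V W

/-- The embedding of `G` into its join with a complete graph. -/
def joinTop.inl (G : SimpleGraph V) (W : Type*) : G ↪g joinTop G W where
  toEmbedding := .inl
  map_rel_iff' := by simp [joinTop]

lemma joinTop_isUniversal_inr (w : W) : (joinTop G W).IsUniversal (Sum.inr w) := by
  rintro (v | w') hne
  · simp [joinTop]
  · simpa [joinTop] using hne

lemma ncard_compl_range_inl : (Set.range (joinTop.inl G W))ᶜ.ncard = Nat.card W := by
  have hcompl : (Set.range (joinTop.inl G W))ᶜ = Set.range Sum.inr :=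
    Set.isCompl_range_inl_range_inr.compl_eq
  rw [hcompl, Set.ncard_range_of_injective Sum.inr_injective]

lemma ncard_oddComponents_joinTop {U : Set (V ⊕ W)} (hU : Set.range Sum.inr ⊆ U) :
    ((joinTop G W).induce Uᶜ).oddComponents.ncard =
      (G.induce (Sum.inl ⁻¹' U)ᶜ).oddComponents.ncard :=
  (ncard_oddComponents_congr <| induceIso (joinTop.inl G W) <|
    (Set.compl_subset_compl.2 hU).trans Set.isCompl_range_inl_range_inr.symm.compl_eq.subset).symm

end Join

lemma ncard_edgeSet_add_ncard_edgeSet_compl {V : Type*} [Finite V] (G : SimpleGraph V) :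
    G.edgeSet.ncard + Gᶜ.edgeSet.ncard = (Nat.card V).choose 2 := by
  classical
  have := Fintype.ofFinite V
  rw [← Set.ncard_union_eq (SimpleGraph.disjoint_edgeSet.2 disjoint_compl_right),
    ← SimpleGraph.edgeSet_sup, sup_compl_eq_top, Nat.card_eq_fintype_card,
    ← SimpleGraph.card_edgeFinset_top_eq_card_choose_two, Set.ncard_eq_toFinset_card']
  rfl

lemma ncard_edgeSet_add_choose_two_le {V : Type*} [Finite V] (G : SimpleGraph V) (s : Set V) :
    G.edgeSet.ncard + s.ncard.choose 2 ≤ (Nat.card V).choose 2 + (G.induce s).edgeSet.ncard := by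
  have hcompl : (G.induce s)ᶜ = Gᶜ.induce s := by
    ext u v
    simp [Subtype.ext_iff]
  have hmono : (Gᶜ.induce s).edgeSet.ncard ≤ Gᶜ.edgeSet.ncard :=
    Nat.card_le_card_of_injective _ (SimpleGraph.Embedding.induce s).mapEdgeSet.injective
  have hV := ncard_edgeSet_add_ncard_edgeSet_compl G
  have hs := ncard_edgeSet_add_ncard_edgeSet_compl (G.induce s)
  rw [hcompl, Nat.card_coe_set_eq] at hs
  omega

lemma ncard_edgeSet_le_choose_two_of_retraction {V : Type*} [Finite V] {G : SimpleGraph V}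
    {r : V → V} (hr : ∀ v, r (r v) = r v) (hadj : ∀ ⦃u v⦄, G.Adj u v → r u = r v) :
    G.edgeSet.ncard ≤ ((Set.range r)ᶜ.ncard + 1).choose 2 := by
  classical
  have := Fintype.ofFinite V
  let N : Finset V := (Set.range r)ᶜ.toFinset
  have hfix : ∀ v, v ∉ N → r v = v := fun v hv ↦ by
    obtain ⟨w, rfl⟩ : v ∈ Set.range r := by_contra fun hv' ↦ hv (Set.mem_toFinset.2 hv')
    exact hr w
  have hcover : G.edgeFinset ⊆ N.offDiag.image Sym2.mk.uncurry ∪ N.image fun v ↦ s(v, r v) := by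
    rintro ⟨u, v⟩ he
    have huv : G.Adj u v := SimpleGraph.mem_edgeFinset.1 he
    rw [Finset.mem_union, Finset.mem_image, Finset.mem_image]
    by_cases hu : u ∈ N
    · by_cases hv : v ∈ N
      · exact .inl ⟨(u, v), Finset.mem_offDiag.2 ⟨hu, hv, huv.ne⟩, rfl⟩
      · exact .inr ⟨u, hu, by rw [hadj huv, hfix v hv]⟩
    · refine .inr ⟨v, by_contra fun hv ↦ huv.ne ?_, by rw [← hadj huv, hfix u hu, Sym2.eq_swap]⟩
      rw [← hfix u hu, hadj huv, hfix v hv]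
  calc G.edgeSet.ncard = G.edgeFinset.card := Set.ncard_eq_toFinset_card' _
    _ ≤ N.card.choose 2 + N.card := by
      refine (Finset.card_le_card hcover).trans <| (Finset.card_union_le _ _).trans ?_
      rw [Sym2.card_image_offDiag]
      exact Nat.add_le_add_left Finset.card_image_le _
    _ = ((Set.range r)ᶜ.ncard + 1).choose 2 := by
      rw [Set.ncard_eq_toFinset_card', Nat.choose_succ_succ', Nat.choose_one_right, add_comm]

lemma ncard_edgeSet_le_choose_two_sub_card_connectedComponent {V : Type*} [Finite V]
    (G : SimpleGraph V) :
    G.edgeSet.ncard ≤ (Nat.card V - Nat.card G.ConnectedComponent + 1).choose 2 := by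
  let rep : G.ConnectedComponent → V := Quot.out
  have hrep : Function.LeftInverse G.connectedComponentMk rep := Quot.out_eq
  have hrange : Set.range (rep ∘ G.connectedComponentMk) = Set.range rep :=
    hrep.surjective.range_comp rep
  rw [← Set.ncard_range_of_injective hrep.injective, ← Set.ncard_compl, ← hrange]
  exact ncard_edgeSet_le_choose_two_of_retraction (fun v ↦ congrArg rep (hrep _))
    fun u v huv ↦ congrArg rep
      (SimpleGraph.ConnectedComponent.connectedComponentMk_eq_of_adj huv)

-- The case distinction is on the sign of `f k - f s = t * (2 * r - 5 * t - 3) / 2`, where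
-- `f s = C(n, 2) - C(n - s, 2) + C(2 * (k - s) + 1, 2)`, `t = k - s` and `r = n - s`. If it is
-- negative, then `f 0 - f s = s * (3 * s + 8 * t + 3 - 2 * r) / 2` is nonnegative.
lemma choose_two_add_choose_two_le_max_add {n k s : ℕ} (hsk : s ≤ k) (hsn : s ≤ n) :
    n.choose 2 + (2 * (k - s) + 1).choose 2 ≤
      max ((2 * k + 1).choose 2) (k.choose 2 + k * (n - k)) + (n - s).choose 2 := by
  obtain ⟨t, rfl⟩ := Nat.exists_eq_add_of_le hsk
  obtain ⟨r, rfl⟩ := Nat.exists_eq_add_of_le hsn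
  simp only [Nat.add_sub_cancel_left, Nat.add_sub_add_left]
  rcases le_total (2 * r) (5 * t + 3) with hr | hr
  · refine le_trans ?_ (Nat.add_le_add_right (le_max_left _ _) _)
    rw [← Nat.cast_le (α := ℚ)] at hr ⊢
    push_cast [Nat.cast_choose_two] at hr ⊢
    nlinarith [mul_le_mul_of_nonneg_left hr (Nat.cast_nonneg s : (0 : ℚ) ≤ s)]
  · obtain ⟨q, rfl⟩ : ∃ q, r = t + q := Nat.exists_eq_add_of_le (by omega)
    refine le_trans ?_ (Nat.add_le_add_right (le_max_right _ _) _)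
    rw [Nat.add_sub_cancel_left]
    rw [← Nat.cast_le (α := ℚ)] at hr ⊢
    push_cast [Nat.cast_choose_two] at hr ⊢
    nlinarith [mul_le_mul_of_nonneg_left hr (Nat.cast_nonneg t : (0 : ℚ) ≤ t)]

section TutteBerge

variable {V W : Type*} [Finite V] [Finite W] {G : SimpleGraph V}

lemma range_inr_subset_of_isTutteViolator {U : Set (V ⊕ W)}
    (hU : (joinTop G W).IsTutteViolator U) (heven : Even (Nat.card (V ⊕ W))) :
    Set.range Sum.inr ⊆ U := by
  rintro _ ⟨w, rfl⟩
  by_contra hw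
  have huniv : ((joinTop G W).induce Uᶜ).IsUniversal ⟨Sum.inr w, hw⟩ :=
    fun x hx ↦ joinTop_isUniversal_inr w (Subtype.coe_ne_coe.2 hx)
  have := (SimpleGraph.Connected.of_isUniversal huniv).preconnected.subsingleton_connectedComponent
  have hle := Set.ncard_le_one_of_subsingleton ((joinTop G W).induce Uᶜ).oddComponents
  have hlt := isTutteViolator_iff.1 hU
  have hparity := (even_ncard_oddComponents_add_ncard_iff (joinTop G W) U).2 heven
  obtain ⟨hcard, hodd⟩ :
      U.ncard = 0 ∧ ((joinTop G W).induce Uᶜ).oddComponents.ncard = 1 := by omega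
  rw [hcard, hodd] at hparity
  exact absurd hparity (by decide)

lemma ncard_eq_ncard_preimage_inl_add_card {U : Set (V ⊕ W)} (hU : Set.range Sum.inr ⊆ U) :
    U.ncard = (Sum.inl ⁻¹' U).ncard + Nat.card W := by
  have hinr : Sum.inr ⁻¹' U = Set.univ := Set.preimage_eq_univ_iff.2 hU
  have hdisj : Disjoint (Sum.inl '' (Sum.inl ⁻¹' U)) (Sum.inr '' (Sum.inr ⁻¹' U)) :=
    Set.isCompl_range_inl_range_inr.disjoint.mono (Set.image_subset_range _ _)
      (Set.image_subset_range _ _)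
  calc U.ncard = (Sum.inl '' (Sum.inl ⁻¹' U) ∪ Sum.inr '' (Sum.inr ⁻¹' U)).ncard := by
        rw [Set.image_preimage_inl_union_image_preimage_inr]
    _ = (Sum.inl ⁻¹' U).ncard + (Sum.inr ⁻¹' U).ncard := by
        rw [Set.ncard_union_eq hdisj, Set.ncard_image_of_injective _ Sum.inl_injective,
          Set.ncard_image_of_injective _ Sum.inr_injective]
    _ = (Sum.inl ⁻¹' U).ncard + Nat.card W := by rw [hinr, Set.ncard_univ]

lemma hasMatchingOfSize_of_isPerfectMatching_joinTop {M : (joinTop G W).Subgraph}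
    (hM : M.IsPerfectMatching) {m : ℕ} (hm : 2 * m + Nat.card W ≤ Nat.card V) :
    hasMatchingOfSize G m := by
  obtain ⟨l, hl, hMl⟩ := exists_hasMatchingOfSize_ncard_edgeSet_le (joinTop.inl G W) hM.1
  have hverts := ncard_verts_le_of_isMatching hM.1
  rw [hM.2.verts_eq_univ, Set.ncard_univ, Nat.card_sum] at hverts
  rw [ncard_compl_range_inl] at hMl
  exact hl.anti (by omega)

lemma exists_ncard_add_card_lt_ncard_oddComponents (heven : Even (Nat.card (V ⊕ W)))
    (hM : ¬∃ M : (joinTop G W).Subgraph, M.IsPerfectMatching) :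
    ∃ S : Set V, S.ncard + Nat.card W < (G.induce Sᶜ).oddComponents.ncard := by
  have := Fintype.ofFinite V
  have := Fintype.ofFinite W
  rw [SimpleGraph.tutte] at hM
  push Not at hM
  obtain ⟨U, hU⟩ := hM
  have hWU := range_inr_subset_of_isTutteViolator hU heven
  refine ⟨Sum.inl ⁻¹' U, ?_⟩
  rw [← ncard_eq_ncard_preimage_inl_add_card hWU, ← ncard_oddComponents_joinTop hWU]
  exact isTutteViolator_iff.1 hU

lemma exists_ncard_add_card_le_ncard_oddComponents_add {k : ℕ}
    (h : ¬hasMatchingOfSize G (k + 1)) :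
    ∃ S : Set V, S.ncard + Nat.card V ≤ (G.induce Sᶜ).oddComponents.ncard + 2 * k := by
  rcases le_or_gt (Nat.card V) (2 * k + 1) with hsmall | hlarge
  · have hparity := even_ncard_oddComponents_add_ncard_iff G ∅
    refine ⟨∅, ?_⟩
    rw [Set.ncard_empty] at hparity ⊢
    grind
  · obtain ⟨d, hd⟩ := Nat.exists_eq_add_of_le hlarge
    have heven : Even (Nat.card (V ⊕ Fin d)) := by
      rw [Nat.card_sum, Nat.card_fin, hd]
      grind
    obtain ⟨S, hS⟩ := exists_ncard_add_card_lt_ncard_oddComponents (G := G) heven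
      fun ⟨M, hM⟩ ↦ h <| hasMatchingOfSize_of_isPerfectMatching_joinTop hM <| by
        rw [Nat.card_fin]; omega
    have hparity := even_ncard_oddComponents_add_ncard_iff G S
    rw [Nat.card_fin] at hS
    exact ⟨S, by grind⟩

end TutteBerge

lemma ncard_edgeSet_add_choose_two_le_choose_two_add {V : Type*} [Finite V]
    (G : SimpleGraph V) (S : Set V) :
    G.edgeSet.ncard + (Nat.card V - S.ncard).choose 2 ≤ (Nat.card V).choose 2 +
      (Nat.card V - S.ncard - Nat.card (G.induce Sᶜ).ConnectedComponent + 1).choose 2 := by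
  have hcount := ncard_edgeSet_add_choose_two_le G Sᶜ
  have hcomponents := ncard_edgeSet_le_choose_two_sub_card_connectedComponent (G.induce Sᶜ)
  rw [Nat.card_coe_set_eq] at hcomponents
  rw [Set.ncard_compl] at hcount hcomponents
  omega

theorem stmt_8_general {V : Type*} [Finite V] (G : SimpleGraph V) (k : ℕ)
    (h : ¬hasMatchingOfSize G (k + 1)) :
    G.edgeSet.ncard ≤ max ((2 * k + 1).choose 2) (k.choose 2 + k * (Nat.card V - k)) := by
  obtain ⟨S, hS⟩ := exists_ncard_add_card_le_ncard_oddComponents_add h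
  have hodd : (G.induce Sᶜ).oddComponents.ncard ≤ Nat.card (G.induce Sᶜ).ConnectedComponent :=
    Set.ncard_le_card _
  have hcomponents : Nat.card (G.induce Sᶜ).ConnectedComponent ≤ Nat.card V - S.ncard := by
    rw [← Set.ncard_compl, ← Nat.card_coe_set_eq]
    exact Nat.card_le_card_of_surjective _ Quot.mk_surjective
  have hSV : S.ncard ≤ Nat.card V := Set.ncard_le_card S
  have hSk : S.ncard ≤ k := by omega
  have hedges := ncard_edgeSet_add_choose_two_le_choose_two_add G S
  have hchoose := Nat.choose_le_choose 2 (show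
    Nat.card V - S.ncard - Nat.card (G.induce Sᶜ).ConnectedComponent + 1 ≤ 2 * (k - S.ncard) + 1
    by omega)
  have hconvex := choose_two_add_choose_two_le_max_add hSk hSV
  omega

/-- Erdős–Gallai theorem on matchings: if `n ≥ 2k + 1` and `G` has no matching of
size `k + 1`, then `e(G) ≤ max { C(2k+1, 2), C(k,2) + k(n−k) }`
(note `C(n,2) − k(n−k) = C(k,2) + k(n−k)`). -/
theorem stmt_8 {V : Type*} [Fintype V] (G : SimpleGraph V) (n k : ℕ)
    (hn : Fintype.card V = n) (hnk : 2 * k + 1 ≤ n)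
    (h : ¬ hasMatchingOfSize G (k + 1)) :
    G.edgeSet.ncard ≤ max (Nat.choose (2 * k + 1) 2) (Nat.choose k 2 + k * (n - k)) := by
  rw [← hn, ← Nat.card_eq_fintype_card]
  exact stmt_8_general G k h
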